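/- Fix ε > 0. There exists a constant C > 0 such that for all sufficiently large X, the number of primes p ≤ X with τ(p−1) ≥ (log X)^{1+ε/2} is at most C · π(X) · (log X)^{−ε/2}; equivalently, the inequality τ(p−1) < (log X)^{1+ε/2} holds for π(X)(1 + O((log X)^{−ε/2})) primes p ≤ X. -/

import Mathlib

open Finset
open scoped Classical

lemma mob_sum (m k : ℕ) (hk : k ≠ 0) (hm : m ∣ k) :
    ∑ e ∈ k.divisors.filter (fun e => m ∣ e), (ArithmeticFunction.moebius (k / e) : ℝ)
      = if k = m then 1 else 0 := by
  obtain ⟨j, rfl⟩ := hm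
  have hm0 : m ≠ 0 := by rintro rfl; simp at hk
  have hj0 : j ≠ 0 := by rintro rfl; simp at hk
  have h1 : ∑ e ∈ (m * j).divisors.filter (fun e => m ∣ e),
      (ArithmeticFunction.moebius (m * j / e) : ℝ)
      = ∑ i ∈ j.divisors, (ArithmeticFunction.moebius (j / i) : ℝ) := by
    symm
    refine Finset.sum_nbij' (fun i => m * i) (fun e => e / m) ?_ ?_ ?_ ?_ ?_
    · intro i hi
      simp only [Nat.mem_divisors, mem_filter] at hi ⊢
      exact ⟨⟨Nat.mul_dvd_mul_left m hi.1, hk⟩, dvd_mul_right _ _⟩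
    · intro e he
      simp only [Nat.mem_divisors, mem_filter] at he ⊢
      obtain ⟨⟨h, _⟩, i, rfl⟩ := he
      rw [Nat.mul_div_cancel_left _ (Nat.pos_of_ne_zero hm0)]
      exact ⟨Nat.dvd_of_mul_dvd_mul_left (Nat.pos_of_ne_zero hm0) h, hj0⟩
    · intro i hi
      exact Nat.mul_div_cancel_left _ (Nat.pos_of_ne_zero hm0)
    · intro e he
      simp only [mem_filter] at he
      exact Nat.mul_div_cancel' he.2
    · intro i hi
      rw [Nat.mul_div_mul_left _ _ (Nat.pos_of_ne_zero hm0)]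
  rw [h1, Nat.sum_div_divisors j (fun i => (ArithmeticFunction.moebius i : ℝ))]
  have h2 := ArithmeticFunction.coe_mul_zeta_apply (f := ArithmeticFunction.moebius) (x := j)
  rw [ArithmeticFunction.moebius_mul_coe_zeta] at h2
  have h3 : (∑ i ∈ j.divisors, (ArithmeticFunction.moebius i : ℝ)) = ((1 : ArithmeticFunction ℤ) j : ℝ) := by
    rw [h2]; push_cast; rfl
  rw [h3, ArithmeticFunction.one_apply]
  have : m * j = m ↔ j = 1 := by
    constructor
    · intro h
      exact Nat.eq_of_mul_eq_mul_left (Nat.pos_of_ne_zero hm0) (by simpa using h)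
    · rintro rfl; simp
  simp [this]

noncomputable def sieveSet (d R : ℕ) : Finset ℕ :=
  (Icc 1 R).filter (fun m => Squarefree m ∧ m.Coprime d)

noncomputable def sieveH (d R : ℕ) : ℝ := ∑ m ∈ sieveSet d R, (m : ℝ)⁻¹

lemma mem_sieveSet {d R m : ℕ} :
    m ∈ sieveSet d R ↔ (1 ≤ m ∧ m ≤ R) ∧ Squarefree m ∧ m.Coprime d := by
  simp [sieveSet]

lemma sieveSet_dvd {d R m k : ℕ} (hk : k ∈ sieveSet d R) (h : m ∣ k) : m ∈ sieveSet d R := by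
  rw [mem_sieveSet] at hk ⊢
  obtain ⟨⟨h1, h2⟩, h3, h4⟩ := hk
  exact ⟨⟨Nat.pos_of_dvd_of_pos h h1, (Nat.le_of_dvd h1 h).trans h2⟩, h3.squarefree_of_dvd h,
    h4.coprime_dvd_left h⟩

lemma one_mem_sieveSet {d R : ℕ} (hR : 1 ≤ R) : 1 ∈ sieveSet d R := by
  rw [mem_sieveSet]; simp [hR]

lemma sieveH_pos {d R : ℕ} (hR : 1 ≤ R) : 0 < sieveH d R := by
  unfold sieveH
  apply Finset.sum_pos
  · intro i hi
    have := (mem_sieveSet.1 hi).1.1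
    positivity
  · exact ⟨1, one_mem_sieveSet hR⟩

lemma exists_weights (d R : ℕ) (hR : 1 ≤ R) : ∃ lam : ℕ → ℝ, lam 1 = 1 ∧
    (∀ e, |lam e| ≤ e) ∧
    ∑ a ∈ sieveSet d R, ∑ b ∈ sieveSet d R, lam a * lam b / (Nat.lcm a b : ℝ)
      ≤ (sieveH d R)⁻¹ := by
  set H := sieveH d R with hHdef
  have hH : 0 < H := sieveH_pos hR
  set S := sieveSet d R with hS
  let mu : ℕ → ℝ := fun k => (ArithmeticFunction.moebius k : ℝ)
  have mu_le : ∀ k, |mu k| ≤ 1 := by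
    intro k
    have := ArithmeticFunction.abs_moebius_le_one (n := k)
    show |((ArithmeticFunction.moebius k : ℤ) : ℝ)| ≤ 1
    exact_mod_cast this
  have mu_sq : ∀ k ∈ S, mu k * mu k = 1 := by
    intro k hk
    have := ArithmeticFunction.moebius_sq_eq_one_of_squarefree (mem_sieveSet.1 hk).2.1
    show ((ArithmeticFunction.moebius k : ℤ) : ℝ) * (ArithmeticFunction.moebius k : ℤ) = 1
    rw [← sq]
    exact_mod_cast this
  have hpos : ∀ k ∈ S, (0 : ℝ) < k := by
    intro k hk
    exact_mod_cast (mem_sieveSet.1 hk).1.1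
  let u : ℕ → ℝ := fun m => mu m * ((m : ℝ)⁻¹ * H⁻¹)
  have hsum1 : ∑ m ∈ S, (m : ℝ)⁻¹ * H⁻¹ = 1 := by
    rw [← Finset.sum_mul]
    exact mul_inv_cancel₀ hH.ne'
  let w : ℕ → ℝ := fun e => ∑ k ∈ S.filter (fun k => e ∣ k), mu (k / e) * u k
  have hw : ∀ e, |w e| ≤ 1 := by
    intro e
    calc |w e| ≤ ∑ k ∈ S.filter (fun k => e ∣ k), |mu (k / e) * u k| :=
          Finset.abs_sum_le_sum_abs _ _
      _ ≤ ∑ k ∈ S.filter (fun k => e ∣ k), (k : ℝ)⁻¹ * H⁻¹ := by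
          apply Finset.sum_le_sum
          intro k hk
          have h0 : (0:ℝ) ≤ (k : ℝ)⁻¹ * H⁻¹ := by positivity
          rw [abs_mul, abs_mul, abs_of_nonneg h0]
          have h1 := mu_le (k / e)
          have h2 := mu_le k
          calc |mu (k / e)| * (|mu k| * ((k : ℝ)⁻¹ * H⁻¹))
              ≤ 1 * (1 * ((k : ℝ)⁻¹ * H⁻¹)) := by gcongr
            _ = _ := by ring
      _ ≤ ∑ k ∈ S, (k : ℝ)⁻¹ * H⁻¹ := by
          apply Finset.sum_le_sum_of_subset_of_nonneg (Finset.filter_subset _ _)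
          intros; positivity
      _ = 1 := hsum1
  have key : ∀ m ∈ S, ∑ e ∈ S, (if m ∣ e then w e else 0) = u m := by
    intro m hm
    have h1 : ∀ e ∈ S, (if m ∣ e then w e else 0)
        = ∑ k ∈ S, if (m ∣ e ∧ e ∣ k) then mu (k / e) * u k else 0 := by
      intro e he
      split_ifs with h
      · simp only [w, h, true_and, Finset.sum_filter]
      · simp [h]
    rw [Finset.sum_congr rfl h1, Finset.sum_comm]
    have h2 : ∀ k ∈ S, ∑ e ∈ S, (if (m ∣ e ∧ e ∣ k) then mu (k / e) * u k else 0)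
        = if k = m then u k else 0 := by
      intro k hk
      have hk0 : k ≠ 0 := by
        have := (mem_sieveSet.1 hk).1.1
        omega
      rw [← Finset.sum_filter]
      have h3 : S.filter (fun e => m ∣ e ∧ e ∣ k) = k.divisors.filter (fun e => m ∣ e) := by
        ext e
        simp only [mem_filter, Nat.mem_divisors]
        constructor
        · rintro ⟨_, h, h'⟩; exact ⟨⟨h', hk0⟩, h⟩
        · rintro ⟨⟨h', _⟩, h⟩; exact ⟨sieveSet_dvd hk h', h, h'⟩
      rw [h3, ← Finset.sum_mul]
      by_cases hmk : m ∣ k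
      · rw [mob_sum m k hk0 hmk]
        split_ifs <;> simp
      · have : k ≠ m := by rintro rfl; exact hmk dvd_rfl
        rw [if_neg this, Finset.filter_false_of_mem]
        · simp
        · intro e he h
          exact hmk (h.trans (Nat.mem_divisors.1 he).1)
    rw [Finset.sum_congr rfl h2]
    simp [hm]
  refine ⟨fun e => e * w e, ?_, ?_, ?_⟩
  · simp only [Nat.cast_one, one_mul, w, one_dvd, Finset.filter_true, Nat.div_one, u]
    rw [← hsum1]
    apply Finset.sum_congr rfl
    intro k hk
    rw [← mul_assoc, mu_sq k hk, one_mul]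
  · intro e
    rw [abs_mul, Nat.abs_cast]
    have := hw e
    have h0 : (0:ℝ) ≤ e := Nat.cast_nonneg e
    nlinarith
  · have h1 : ∀ a ∈ S, ∀ b ∈ S, (a * w a) * (b * w b) / (Nat.lcm a b : ℝ)
        = ∑ m ∈ S, (Nat.totient m : ℝ) * ((if m ∣ a then w a else 0) * (if m ∣ b then w b else 0)) := by
      intro a ha b hb
      have ha0 := hpos a ha
      have hb0 := hpos b hb
      have hgl : (Nat.gcd a b : ℝ) * Nat.lcm a b = a * b := by exact_mod_cast Nat.gcd_mul_lcm a b
      have hl : (0:ℝ) < Nat.lcm a b := by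
        have : 0 < Nat.lcm a b := Nat.lcm_pos (by exact_mod_cast ha0) (by exact_mod_cast hb0)
        exact_mod_cast this
      have hg : (Nat.gcd a b : ℝ) = ∑ m ∈ S, if (m ∣ a ∧ m ∣ b) then (Nat.totient m : ℝ) else 0 := by
        rw [← Finset.sum_filter]
        have h3 : S.filter (fun m => m ∣ a ∧ m ∣ b) = (Nat.gcd a b).divisors := by
          ext m
          simp only [mem_filter, Nat.mem_divisors, Nat.dvd_gcd_iff]
          constructor
          · rintro ⟨_, h⟩
            refine ⟨h, ?_⟩
            have : 0 < Nat.gcd a b := Nat.gcd_pos_of_pos_left _ (by exact_mod_cast ha0)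
            omega
          · rintro ⟨h, _⟩; exact ⟨sieveSet_dvd ha h.1, h⟩
        rw [h3]
        exact_mod_cast (Nat.sum_totient _).symm
      have h4 : (a * w a) * (b * w b) / (Nat.lcm a b : ℝ) = (Nat.gcd a b : ℝ) * (w a * w b) := by
        rw [div_eq_iff hl.ne']
        linear_combination (-(w a * w b)) * hgl
      rw [h4, hg, Finset.sum_mul]
      apply Finset.sum_congr rfl
      intro m _
      by_cases hma : m ∣ a <;> by_cases hmb : m ∣ b <;> simp [hma, hmb]
    have h2 : ∑ a ∈ S, ∑ b ∈ S, (a * w a) * (b * w b) / (Nat.lcm a b : ℝ)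
        = ∑ m ∈ S, (Nat.totient m : ℝ) * (u m * u m) := by
      calc _ = ∑ a ∈ S, ∑ b ∈ S, ∑ m ∈ S, (Nat.totient m : ℝ) *
            ((if m ∣ a then w a else 0) * (if m ∣ b then w b else 0)) :=
            Finset.sum_congr rfl fun a ha => Finset.sum_congr rfl fun b hb => h1 a ha b hb
        _ = ∑ a ∈ S, ∑ m ∈ S, ∑ b ∈ S, (Nat.totient m : ℝ) *
            ((if m ∣ a then w a else 0) * (if m ∣ b then w b else 0)) :=
            Finset.sum_congr rfl fun a ha => Finset.sum_comm
        _ = ∑ m ∈ S, ∑ a ∈ S, ∑ b ∈ S, (Nat.totient m : ℝ) *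
            ((if m ∣ a then w a else 0) * (if m ∣ b then w b else 0)) := Finset.sum_comm
        _ = _ := by
            apply Finset.sum_congr rfl
            intro m hm
            rw [← key m hm, Finset.sum_mul_sum, Finset.mul_sum]
            apply Finset.sum_congr rfl
            intro a _
            rw [Finset.mul_sum]
    rw [h2]
    calc ∑ m ∈ S, (Nat.totient m : ℝ) * (u m * u m)
        ≤ ∑ m ∈ S, ((m : ℝ)⁻¹ * H⁻¹) * H⁻¹ := by
          apply Finset.sum_le_sum
          intro m hm
          have hm0 := hpos m hm
          have h5 : u m * u m = ((m : ℝ)⁻¹ * H⁻¹) * ((m : ℝ)⁻¹ * H⁻¹) := by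
            have := mu_sq m hm
            simp only [u]
            linear_combination ((m : ℝ)⁻¹ * H⁻¹) * ((m : ℝ)⁻¹ * H⁻¹) * this
          rw [h5]
          have h6 : (Nat.totient m : ℝ) ≤ m := by exact_mod_cast Nat.totient_le m
          calc _ ≤ (m : ℝ) * (((m : ℝ)⁻¹ * H⁻¹) * ((m : ℝ)⁻¹ * H⁻¹)) := by gcongr
            _ = _ := by field_simp
      _ = H⁻¹ := by rw [← Finset.sum_mul, hsum1, one_mul]

lemma count_ap (d q N : ℕ) (hq : 0 < q) (hqd : q.Coprime d) :
    |(((Ioc 0 N).filter (fun k => q ∣ 1 + d * k)).card : ℝ) - (N : ℝ) / q| ≤ 1 := by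
  obtain ⟨v, hv⟩ : ∃ v, q ∣ 1 + d * v := by
    obtain ⟨v, _, hv⟩ := Nat.exists_mul_mod_eq_of_coprime (q - 1) hqd.symm hq.ne'
    refine ⟨v, ?_⟩
    have h : 1 + d * v ≡ 1 + (q - 1) [MOD q] := Nat.ModEq.add_left 1 hv
    apply Nat.modEq_zero_iff_dvd.1
    refine h.trans ?_
    rw [Nat.add_sub_cancel' hq]
    exact Nat.modEq_zero_iff_dvd.2 dvd_rfl
  have h1 : (Ioc 0 N).filter (fun k => q ∣ 1 + d * k) = (Ioc 0 N).filter (fun k => k ≡ v [MOD q]) := by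
    apply Finset.filter_congr
    intro k _
    constructor
    · intro h
      have h2 : 1 + d * k ≡ 1 + d * v [MOD q] :=
        ((Nat.modEq_zero_iff_dvd).2 h).trans ((Nat.modEq_zero_iff_dvd).2 hv).symm
      exact Nat.ModEq.cancel_left_of_coprime hqd (Nat.ModEq.add_left_cancel' 1 h2)
    · intro h
      exact Nat.modEq_zero_iff_dvd.1 (((h.mul_left d).add_left 1).trans (Nat.modEq_zero_iff_dvd.2 hv))
  rw [h1]
  have h3 := Nat.Ioc_filter_modEq_card 0 N hq v
  set c := ((Ioc 0 N).filter (fun k => k ≡ v [MOD q])).card with hc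
  have h4 : |(c : ℚ) - (N : ℚ) / q| ≤ 1 := by
    have h5 : (c : ℚ) = max ((⌊((N : ℚ) - v) / q⌋ : ℚ) - ⌊(((0 : ℕ) : ℚ) - v) / q⌋) 0 := by
      have : ((c : ℤ) : ℚ) = _ := congrArg (Int.cast) (by convert h3)
      push_cast at this
      simpa using this
    have e1 : (N : ℚ) / q = ((N : ℚ) - v) / q - (((0 : ℕ) : ℚ) - v) / q := by
      push_cast; ring
    have e2 : (0 : ℚ) ≤ (N : ℚ) / q := by positivity
    rw [e1] at e2 ⊢
    set A := ((N : ℚ) - v) / q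
    set B := (((0 : ℕ) : ℚ) - v) / q
    have f1 := Int.floor_le A
    have f2 := Int.lt_floor_add_one A
    have f3 := Int.floor_le B
    have f4 := Int.lt_floor_add_one B
    rw [h5, abs_le]
    rcases le_total ((⌊A⌋ : ℚ) - ⌊B⌋) 0 with h | h
    · rw [max_eq_right h]; constructor <;> linarith
    · rw [max_eq_left h]; constructor <;> linarith
  have h6 : ((|(c : ℚ) - (N : ℚ) / q| : ℚ) : ℝ) ≤ ((1 : ℚ) : ℝ) := by exact_mod_cast h4
  push_cast at h6
  exact h6

lemma sieve_bound (d R N : ℕ) (hd : 1 ≤ d) (hR : 1 ≤ R) :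
    (((Ioc 0 N).filter (fun k => (1 + d * k).Prime)).card : ℝ)
      ≤ N * (sieveH d R)⁻¹ + R ^ 4 + R := by
  obtain ⟨lam, h1, hle, hquad⟩ := exists_weights d R hR
  set S := sieveSet d R with hS
  set K := (Ioc 0 N).filter (fun k => (1 + d * k).Prime) with hK
  have hsplit : (K.card : ℝ) ≤ ((K.filter (fun k => R < 1 + d * k)).card : ℝ) + R := by
    have e : K.card = (K.filter (fun k => R < 1 + d * k)).card
        + (K.filter (fun k => ¬ R < 1 + d * k)).card :=
      (Finset.card_filter_add_card_filter_not _).symm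
    have e2 : (K.filter (fun k => ¬ R < 1 + d * k)).card ≤ R := by
      calc _ ≤ (Ioc 0 R).card := by
            apply Finset.card_le_card
            intro k hk
            simp only [hK, mem_filter, mem_Ioc] at hk ⊢
            refine ⟨hk.1.1.1, ?_⟩
            nlinarith [hk.2]
        _ = R := by simp
    have : K.card ≤ (K.filter (fun k => R < 1 + d * k)).card + R := by omega
    exact_mod_cast this
  have hmain : ((K.filter (fun k => R < 1 + d * k)).card : ℝ)
      ≤ ∑ k ∈ Ioc 0 N, (∑ a ∈ S, if a ∣ 1 + d * k then lam a else 0) ^ 2 := by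
    rw [Finset.card_eq_sum_ones]
    push_cast
    calc _ ≤ ∑ k ∈ K.filter (fun k => R < 1 + d * k),
          (∑ a ∈ S, if a ∣ 1 + d * k then lam a else 0) ^ 2 := by
          apply Finset.sum_le_sum
          intro k hk
          simp only [hK, mem_filter] at hk
          have : ∑ a ∈ S, (if a ∣ 1 + d * k then lam a else 0) = 1 := by
            rw [Finset.sum_eq_single 1]
            · simp [h1]
            · intro a ha ha1
              rw [if_neg]
              intro hdvd
              rcases (Nat.dvd_prime hk.1.2).1 hdvd with h | h
              · exact ha1 h
              · have := (mem_sieveSet.1 ha).1.2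
                omega
            · intro h; exact absurd (one_mem_sieveSet hR) h
          rw [this]; norm_num
      _ ≤ _ := by
          apply Finset.sum_le_sum_of_subset_of_nonneg
          · intro k hk
            simp only [hK, mem_filter] at hk
            exact hk.1.1
          · intros; positivity
  have hexp : ∑ k ∈ Ioc 0 N, (∑ a ∈ S, if a ∣ 1 + d * k then lam a else 0) ^ 2
      = ∑ a ∈ S, ∑ b ∈ S, lam a * lam b *
        (((Ioc 0 N).filter (fun k => Nat.lcm a b ∣ 1 + d * k)).card : ℝ) := by
    calc _ = ∑ k ∈ Ioc 0 N, ∑ a ∈ S, ∑ b ∈ S,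
          (if Nat.lcm a b ∣ 1 + d * k then lam a * lam b else 0) := by
          apply Finset.sum_congr rfl
          intro k _
          rw [sq, Finset.sum_mul_sum]
          apply Finset.sum_congr rfl
          intro a _
          apply Finset.sum_congr rfl
          intro b _
          simp only [Nat.lcm_dvd_iff]
          by_cases ha : a ∣ 1 + d * k <;> by_cases hb : b ∣ 1 + d * k <;> simp [ha, hb]
      _ = ∑ a ∈ S, ∑ k ∈ Ioc 0 N, ∑ b ∈ S,
          (if Nat.lcm a b ∣ 1 + d * k then lam a * lam b else 0) := Finset.sum_comm
      _ = ∑ a ∈ S, ∑ b ∈ S, ∑ k ∈ Ioc 0 N,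
          (if Nat.lcm a b ∣ 1 + d * k then lam a * lam b else 0) :=
          Finset.sum_congr rfl fun a _ => Finset.sum_comm
      _ = _ := by
          apply Finset.sum_congr rfl
          intro a _
          apply Finset.sum_congr rfl
          intro b _
          rw [← Finset.sum_filter, Finset.sum_const, nsmul_eq_mul, mul_comm]
  have hcardS : (S.card : ℝ) ≤ R := by
    have : S.card ≤ (Icc 1 R).card := Finset.card_le_card (Finset.filter_subset _ _)
    rw [Nat.card_Icc] at this
    exact_mod_cast this
  have hterm : ∀ a ∈ S, ∀ b ∈ S, lam a * lam b *
        (((Ioc 0 N).filter (fun k => Nat.lcm a b ∣ 1 + d * k)).card : ℝ)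
        ≤ N * (lam a * lam b / (Nat.lcm a b : ℝ)) + (R : ℝ) * R := by
    intro a ha b hb
    have ha' := mem_sieveSet.1 ha
    have hb' := mem_sieveSet.1 hb
    have hc := count_ap d (Nat.lcm a b) N (Nat.lcm_pos ha'.1.1 hb'.1.1)
      (Nat.Coprime.coprime_dvd_left (Nat.lcm_dvd_mul a b) (ha'.2.2.mul_left hb'.2.2))
    set c := (((Ioc 0 N).filter (fun k => Nat.lcm a b ∣ 1 + d * k)).card : ℝ)
    have hla : |lam a| ≤ R := (hle a).trans (by exact_mod_cast ha'.1.2)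
    have hlb : |lam b| ≤ R := (hle b).trans (by exact_mod_cast hb'.1.2)
    have : |lam a * lam b * (c - (N : ℝ) / (Nat.lcm a b : ℝ))| ≤ (R : ℝ) * R * 1 := by
      rw [abs_mul, abs_mul]
      gcongr
    have h2 := le_of_abs_le this
    have h3 : lam a * lam b * c = N * (lam a * lam b / (Nat.lcm a b : ℝ))
      + lam a * lam b * (c - (N : ℝ) / (Nat.lcm a b : ℝ)) := by ring
    linarith
  have hfin : ∑ a ∈ S, ∑ b ∈ S, lam a * lam b *
        (((Ioc 0 N).filter (fun k => Nat.lcm a b ∣ 1 + d * k)).card : ℝ)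
        ≤ N * (sieveH d R)⁻¹ + R ^ 4 := by
    calc _ ≤ ∑ a ∈ S, ∑ b ∈ S, (N * (lam a * lam b / (Nat.lcm a b : ℝ)) + (R : ℝ) * R) :=
          Finset.sum_le_sum fun a ha => Finset.sum_le_sum fun b hb => hterm a ha b hb
      _ = N * (∑ a ∈ S, ∑ b ∈ S, lam a * lam b / (Nat.lcm a b : ℝ))
          + (S.card : ℝ) * ((S.card : ℝ) * ((R : ℝ) * R)) := by
          simp only [Finset.sum_add_distrib, Finset.mul_sum, Finset.sum_const, nsmul_eq_mul]
      _ ≤ N * (sieveH d R)⁻¹ + (R : ℝ) * ((R : ℝ) * ((R : ℝ) * R)) := by gcongr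
      _ = _ := by ring
  linarith

lemma harm_le (d R : ℕ) (hd : 1 ≤ d) :
    ∑ n ∈ Icc 1 R, (n : ℝ)⁻¹ ≤ 2 * (∑ l ∈ d.divisors, (l : ℝ)⁻¹) * sieveH d R := by
  have hsq : ∑ s ∈ Icc 1 R, ((s : ℝ) ^ 2)⁻¹ ≤ 2 := by
    have h := sum_Ioo_inv_sq_le (α := ℝ) 0 (R + 1)
    have e : Ioo 0 (R + 1) = Icc 1 R := by ext; simp only [mem_Ioo, mem_Icc]; omega
    rw [e] at h
    simpa using h
  have hex : ∀ n : ℕ, ∃ t : ℕ × ℕ × ℕ, n ∈ Icc 1 R →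
      t.1 ∈ d.divisors ∧ t.2.1 ∈ Icc 1 R ∧ t.2.2 ∈ sieveSet d R ∧ n = t.1 * (t.2.1 ^ 2 * t.2.2) := by
    intro n
    by_cases hn : n ∈ Icc 1 R
    · rw [mem_Icc] at hn
      obtain ⟨a, b, hab, hsf⟩ := Nat.sq_mul_squarefree n
      obtain ⟨m, hm⟩ := Nat.gcd_dvd_left a d
      have ha0 : 0 < a := Nat.pos_of_ne_zero (by rintro rfl; simp at hab; omega)
      have hb0 : 0 < b := Nat.pos_of_ne_zero (by rintro rfl; simp at hab; omega)
      have hm0 : 0 < m := Nat.pos_of_ne_zero (by rintro rfl; simp at hm; omega)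
      refine ⟨(Nat.gcd a d, b, m), fun _ => ⟨?_, ?_, ?_, ?_⟩⟩
      · simp only [Nat.mem_divisors]
        exact ⟨Nat.gcd_dvd_right a d, by omega⟩
      · simp only [mem_Icc]
        refine ⟨hb0, ?_⟩
        have : b ∣ n := ⟨b * a, by rw [← hab]; ring⟩
        exact (Nat.le_of_dvd (by omega) this).trans hn.2
      · rw [mem_sieveSet]
        have hmd : m ∣ a := ⟨Nat.gcd a d, by rw [mul_comm]; exact hm⟩
        have hmn : m ∣ n := hmd.trans ⟨b ^ 2, by rw [← hab]; ring⟩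
        refine ⟨⟨hm0, (Nat.le_of_dvd (by omega) hmn).trans hn.2⟩, hsf.squarefree_of_dvd hmd, ?_⟩
        have hcop : Nat.Coprime (Nat.gcd a d) m := by
          rw [hm] at hsf
          exact Nat.coprime_of_squarefree_mul hsf
        have h1 : Nat.gcd m d ∣ Nat.gcd a d := Nat.gcd_dvd_gcd_of_dvd_left d hmd
        exact Nat.eq_one_of_dvd_coprimes hcop h1 (Nat.gcd_dvd_left m d)
      · show n = Nat.gcd a d * (b ^ 2 * m)
        rw [← hab]
        nth_rewrite 1 [hm]
        ring
    · exact ⟨(0, 0, 0), fun h => absurd h hn⟩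
  choose t ht using hex
  set T := d.divisors ×ˢ (Icc 1 R ×ˢ sieveSet d R) with hT
  let f : ℕ × ℕ × ℕ → ℝ := fun x => (x.1 : ℝ)⁻¹ * (((x.2.1 : ℝ) ^ 2)⁻¹ * (x.2.2 : ℝ)⁻¹)
  calc ∑ n ∈ Icc 1 R, (n : ℝ)⁻¹ = ∑ n ∈ Icc 1 R, f (t n) := by
        apply Finset.sum_congr rfl
        intro n hn
        have := (ht n hn).2.2.2
        conv_lhs => rw [this]
        simp only [f]
        push_cast
        rw [mul_inv, mul_inv]
    _ = ∑ x ∈ (Icc 1 R).image t, f x := by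
        rw [Finset.sum_image]
        intro x hx y hy hxy
        rw [(ht x hx).2.2.2, (ht y hy).2.2.2, hxy]
    _ ≤ ∑ x ∈ T, f x := by
        apply Finset.sum_le_sum_of_subset_of_nonneg
        · intro x hx
          obtain ⟨n, hn, rfl⟩ := Finset.mem_image.1 hx
          obtain ⟨h1, h2, h3, _⟩ := ht n hn
          simp only [hT, Finset.mem_product]
          exact ⟨h1, h2, h3⟩
        · intros; positivity
    _ = (∑ l ∈ d.divisors, (l : ℝ)⁻¹) * ((∑ s ∈ Icc 1 R, ((s : ℝ) ^ 2)⁻¹) * sieveH d R) := by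
        rw [hT, sieveH, Finset.sum_mul_sum, Finset.sum_product]
        rw [Finset.sum_mul]
        apply Finset.sum_congr rfl
        intro l _
        rw [Finset.sum_product, Finset.mul_sum]
        apply Finset.sum_congr rfl
        intro s _
        rw [Finset.mul_sum]
    _ ≤ (∑ l ∈ d.divisors, (l : ℝ)⁻¹) * (2 * sieveH d R) := by
        have : 0 ≤ sieveH d R := by unfold sieveH; positivity
        gcongr
    _ = _ := by ring

lemma sum_sigma (Y : ℕ) :
    ∑ d ∈ Icc 1 Y, (d : ℝ)⁻¹ * ∑ l ∈ d.divisors, (l : ℝ)⁻¹ ≤ 2 * ∑ n ∈ Icc 1 Y, (n : ℝ)⁻¹ := by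
  have hsq : ∑ s ∈ Icc 1 Y, ((s : ℝ) ^ 2)⁻¹ ≤ 2 := by
    have h := sum_Ioo_inv_sq_le (α := ℝ) 0 (Y + 1)
    have e : Ioo 0 (Y + 1) = Icc 1 Y := by ext; simp only [mem_Ioo, mem_Icc]; omega
    rw [e] at h
    simpa using h
  have hin : ∀ l ∈ Icc 1 Y, ∑ d ∈ Icc 1 Y, (if l ∣ d then (d : ℝ)⁻¹ else 0)
      ≤ (l : ℝ)⁻¹ * ∑ n ∈ Icc 1 Y, (n : ℝ)⁻¹ := by
    intro l hl
    rw [mem_Icc] at hl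
    rw [← Finset.sum_filter, Finset.mul_sum]
    calc ∑ d ∈ (Icc 1 Y).filter (fun d => l ∣ d), (d : ℝ)⁻¹
        ≤ ∑ d ∈ (Icc 1 Y).image (fun n => l * n), (d : ℝ)⁻¹ := by
          apply Finset.sum_le_sum_of_subset_of_nonneg
          · intro d hd
            simp only [mem_filter, mem_Icc] at hd
            obtain ⟨⟨h1, h2⟩, n, rfl⟩ := hd
            apply Finset.mem_image_of_mem
            rw [mem_Icc]
            constructor
            · exact Nat.pos_of_ne_zero (by rintro rfl; simp at h1)
            · nlinarith
          · intros; positivity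
      _ = ∑ n ∈ Icc 1 Y, (l : ℝ)⁻¹ * (n : ℝ)⁻¹ := by
          rw [Finset.sum_image]
          · apply Finset.sum_congr rfl
            intro n _
            push_cast
            rw [mul_inv]
          · intro x _ y _ hxy
            exact Nat.eq_of_mul_eq_mul_left hl.1 hxy
  calc ∑ d ∈ Icc 1 Y, (d : ℝ)⁻¹ * ∑ l ∈ d.divisors, (l : ℝ)⁻¹
      = ∑ d ∈ Icc 1 Y, ∑ l ∈ Icc 1 Y, (l : ℝ)⁻¹ * (if l ∣ d then (d : ℝ)⁻¹ else 0) := by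
        apply Finset.sum_congr rfl
        intro d hd
        rw [mem_Icc] at hd
        have e : d.divisors = (Icc 1 Y).filter (fun l => l ∣ d) := by
          ext l
          simp only [Nat.mem_divisors, mem_filter, mem_Icc]
          constructor
          · rintro ⟨h, _⟩
            exact ⟨⟨Nat.pos_of_dvd_of_pos h hd.1, (Nat.le_of_dvd hd.1 h).trans hd.2⟩, h⟩
          · rintro ⟨_, h⟩; exact ⟨h, by omega⟩
        rw [e, Finset.sum_filter, Finset.mul_sum]
        apply Finset.sum_congr rfl
        intro l _
        split_ifs <;> ring
    _ = ∑ l ∈ Icc 1 Y, (l : ℝ)⁻¹ * ∑ d ∈ Icc 1 Y, (if l ∣ d then (d : ℝ)⁻¹ else 0) := by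
        rw [Finset.sum_comm]
        apply Finset.sum_congr rfl
        intro l _
        rw [Finset.mul_sum]
    _ ≤ ∑ l ∈ Icc 1 Y, (l : ℝ)⁻¹ * ((l : ℝ)⁻¹ * ∑ n ∈ Icc 1 Y, (n : ℝ)⁻¹) := by
        apply Finset.sum_le_sum
        intro l hl
        have := hin l hl
        gcongr
    _ = (∑ s ∈ Icc 1 Y, ((s : ℝ) ^ 2)⁻¹) * ∑ n ∈ Icc 1 Y, (n : ℝ)⁻¹ := by
        rw [Finset.sum_mul]
        apply Finset.sum_congr rfl
        intro l _
        rw [sq, mul_inv]; ring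
    _ ≤ _ := by gcongr

lemma tau_le (n : ℕ) (hn : 1 ≤ n) :
    n.divisors.card ≤ 2 * ((Icc 1 (Nat.sqrt n)).filter (fun e => e ∣ n)).card := by
  have e := (Finset.card_filter_add_card_filter_not (s := n.divisors) (fun e => e ≤ Nat.sqrt n)).symm
  have h1 : (n.divisors.filter (fun e => e ≤ Nat.sqrt n)).card
      ≤ ((Icc 1 (Nat.sqrt n)).filter (fun e => e ∣ n)).card := by
    apply Finset.card_le_card
    intro e he
    simp only [mem_filter, Nat.mem_divisors, mem_Icc] at he ⊢
    exact ⟨⟨Nat.pos_of_dvd_of_pos he.1.1 hn, he.2⟩, he.1.1⟩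
  have h2 : (n.divisors.filter (fun e => ¬ e ≤ Nat.sqrt n)).card
      ≤ ((Icc 1 (Nat.sqrt n)).filter (fun e => e ∣ n)).card := by
    apply Finset.card_le_card_of_injOn (fun e => n / e)
    · intro e he
      simp only [Finset.coe_filter, Nat.mem_divisors, Set.mem_ofPred_eq, mem_Icc] at he ⊢
      obtain ⟨⟨⟨k, hk⟩, _⟩, hlt⟩ := he
      have he0 : 0 < e := by omega
      have : n / e = k := by rw [hk]; exact Nat.mul_div_cancel_left _ he0
      rw [this]
      refine ⟨⟨Nat.pos_of_ne_zero (by rintro rfl; simp at hk; omega), ?_⟩, ⟨e, by rw [hk]; ring⟩⟩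
      by_contra hcon
      have h3 := Nat.sqrt_lt'.1 (not_le.1 hlt)
      have h4 := Nat.sqrt_lt'.1 (not_le.1 hcon)
      have : e * k < e ^ 2 := by rw [← hk]; exact h3
      have : e * k < k ^ 2 := by rw [← hk]; exact h4
      have a1 : k < e := by nlinarith
      have a2 : e < k := by nlinarith
      omega
    · intro x hx y hy hxy
      simp only [Finset.coe_filter, Nat.mem_divisors, Set.mem_ofPred_eq] at hx hy
      have hx1 := Nat.div_mul_cancel hx.1.1
      have hy1 := Nat.div_mul_cancel hy.1.1
      simp only at hxy
      rw [hxy] at hx1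
      have : 0 < n / y := Nat.pos_of_ne_zero (by intro h; rw [h] at hy1; simp at hy1; omega)
      exact Nat.eq_of_mul_eq_mul_left this (hx1.trans hy1.symm)
  omega

lemma titch (M : ℕ) :
    ∑ p ∈ (range (M + 1)).filter Nat.Prime, (p - 1).divisors.card
      ≤ 2 * ∑ d ∈ Icc 1 (Nat.sqrt M), ((Ioc 0 (M / d)).filter (fun k => (1 + d * k).Prime)).card := by
  calc _ ≤ ∑ p ∈ (range (M + 1)).filter Nat.Prime,
        2 * ∑ d ∈ Icc 1 (Nat.sqrt M), (if d ∣ p - 1 then 1 else 0) := by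
        apply Finset.sum_le_sum
        intro p hp
        simp only [mem_filter, mem_range] at hp
        have h2 := hp.2.two_le
        refine (tau_le (p - 1) (by omega)).trans ?_
        rw [← Finset.sum_filter, ← Finset.card_eq_sum_ones]
        gcongr
        omega
    _ = 2 * ∑ d ∈ Icc 1 (Nat.sqrt M), ∑ p ∈ (range (M + 1)).filter Nat.Prime,
          (if d ∣ p - 1 then 1 else 0) := by
        rw [← Finset.mul_sum, Finset.sum_comm]
    _ ≤ _ := by
        gcongr with d hd
        rw [mem_Icc] at hd
        rw [← Finset.sum_filter, ← Finset.card_eq_sum_ones]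
        apply Finset.card_le_card_of_injOn (fun p => (p - 1) / d)
        · intro p hp
          simp only [Finset.coe_filter, mem_filter, mem_range, Set.mem_ofPred_eq, mem_Ioc] at hp ⊢
          obtain ⟨⟨hpM, hpp⟩, k, hk⟩ := hp
          have h2 := hpp.two_le
          have e : (p - 1) / d = k := by rw [hk]; exact Nat.mul_div_cancel_left _ hd.1
          rw [e]
          refine ⟨⟨Nat.pos_of_ne_zero (by rintro rfl; simp at hk; omega), ?_⟩, ?_⟩
          · rw [Nat.le_div_iff_mul_le hd.1, mul_comm, ← hk]; omega
          · rw [← hk, Nat.add_sub_cancel' (by omega)]; exact hpp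
        · intro x hx y hy hxy
          simp only [Finset.coe_filter, mem_filter, mem_range, Set.mem_ofPred_eq] at hx hy hxy
          have hx2 := hx.1.2.two_le
          have hy2 := hy.1.2.two_le
          have hx1 := Nat.div_mul_cancel hx.2
          have hy1 := Nat.div_mul_cancel hy.2
          rw [hxy] at hx1
          omega

lemma titch_bound (X : ℝ) (hX : Real.exp 1 ≤ X) :
    ((∑ p ∈ (range (⌊X⌋₊ + 1)).filter Nat.Prime, (p - 1).divisors.card : ℕ) : ℝ) ≤ 132 * X := by
  have hX1 : 1 ≤ X := le_trans (by have := Real.add_one_le_exp 1; linarith) hX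
  have hX0 : 0 < X := by linarith
  set L := Real.log X with hL
  have hL1 : 1 ≤ L := by rw [hL, Real.le_log_iff_exp_le hX0]; exact hX
  set M := ⌊X⌋₊ with hM
  have hMX : (M : ℝ) ≤ X := Nat.floor_le hX0.le
  have hM1 : 1 ≤ M := Nat.le_floor (by simpa using hX1)
  set R := ⌊X ^ (1 / 8 : ℝ)⌋₊ with hR
  have hRle : (R : ℝ) ≤ X ^ (1 / 8 : ℝ) := Nat.floor_le (by positivity)
  have hR1 : 1 ≤ R := Nat.le_floor (by simpa using Real.one_le_rpow hX1 (by norm_num))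
  have hR4 : (R : ℝ) ^ 4 ≤ √X := by
    calc (R : ℝ) ^ 4 ≤ (X ^ (1 / 8 : ℝ)) ^ 4 := by gcongr
      _ = √X := by
        rw [← Real.rpow_natCast, ← Real.rpow_mul hX0.le, Real.sqrt_eq_rpow]; norm_num
  have hRR : (R : ℝ) ≤ (R : ℝ) ^ 4 := by
    have : (1 : ℝ) ≤ R := by exact_mod_cast hR1
    exact le_self_pow₀ this (by norm_num)
  have hharm : L / 8 ≤ ∑ n ∈ Icc 1 R, (n : ℝ)⁻¹ := by
    have h1 := log_add_one_le_harmonic R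
    rw [harmonic_eq_sum_Icc] at h1
    push_cast at h1
    refine le_trans ?_ h1
    have h2 : X ^ (1 / 8 : ℝ) ≤ (R : ℝ) + 1 := (Nat.lt_floor_add_one _).le
    have h3 := Real.log_le_log (by positivity) h2
    rw [Real.log_rpow hX0] at h3
    rw [hL]; linarith
  set Y := Nat.sqrt M with hY
  have hYX : (Y : ℝ) ≤ √X := by
    apply Real.le_sqrt_of_sq_le
    have : Y ^ 2 ≤ M := Nat.sqrt_le' M
    have : ((Y ^ 2 : ℕ) : ℝ) ≤ M := by exact_mod_cast this
    push_cast at this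
    linarith
  have hY1 : 1 ≤ Y := Nat.le_sqrt'.2 (by simpa using hM1)
  have hharmY : ∑ n ∈ Icc 1 Y, (n : ℝ)⁻¹ ≤ 2 * L := by
    have h1 := harmonic_le_one_add_log Y
    rw [harmonic_eq_sum_Icc] at h1
    push_cast at h1
    have h2 : Real.log Y ≤ L := by
      apply Real.log_le_log (by exact_mod_cast hY1)
      have : Y ≤ M := Nat.sqrt_le_self M
      have : (Y : ℝ) ≤ M := by exact_mod_cast this
      linarith
    linarith
  have hd : ∀ d ∈ Icc 1 Y, (((Ioc 0 (M / d)).filter (fun k => (1 + d * k).Prime)).card : ℝ)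
      ≤ (16 * X / L) * ((d : ℝ)⁻¹ * ∑ l ∈ d.divisors, (l : ℝ)⁻¹) + 2 * √X := by
    intro d hd
    rw [mem_Icc] at hd
    have h1 := sieve_bound d R (M / d) hd.1 hR1
    have hH : 0 < sieveH d R := sieveH_pos hR1
    have h2 := hharm.trans (harm_le d R hd.1)
    set σ := ∑ l ∈ d.divisors, (l : ℝ)⁻¹
    have h3 : (sieveH d R)⁻¹ ≤ 16 * σ / L := by
      rw [inv_le_iff_one_le_mul₀ hH, ← sub_nonneg]
      have : 16 * σ / L * sieveH d R - 1 = (16 * σ * sieveH d R - L) / L := by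
        field_simp
      rw [this]
      apply div_nonneg _ (by linarith)
      linarith
    have h4 : ((M / d : ℕ) : ℝ) ≤ X * (d : ℝ)⁻¹ := by
      refine Nat.cast_div_le.trans ?_
      rw [div_eq_mul_inv]
      gcongr
    calc _ ≤ ((M / d : ℕ) : ℝ) * (sieveH d R)⁻¹ + R ^ 4 + R := h1
      _ ≤ (X * (d : ℝ)⁻¹) * (16 * σ / L) + √X + √X := by
          have := hRR.trans hR4
          gcongr
      _ = _ := by ring
  have ht : ((∑ p ∈ (range (M + 1)).filter Nat.Prime, (p - 1).divisors.card : ℕ) : ℝ) ≤ _ :=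
    Nat.cast_le.2 (titch M)
  push_cast at ht ⊢
  refine ht.trans ?_
  have hs := sum_sigma Y
  have h5 : ∑ d ∈ Icc 1 Y, (((Ioc 0 (M / d)).filter (fun k => (1 + d * k).Prime)).card : ℝ)
      ≤ 66 * X := by
    calc _ ≤ ∑ d ∈ Icc 1 Y, ((16 * X / L) * ((d : ℝ)⁻¹ * ∑ l ∈ d.divisors, (l : ℝ)⁻¹) + 2 * √X) :=
          Finset.sum_le_sum hd
      _ = (16 * X / L) * ∑ d ∈ Icc 1 Y, ((d : ℝ)⁻¹ * ∑ l ∈ d.divisors, (l : ℝ)⁻¹)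
          + Y * (2 * √X) := by
          rw [Finset.sum_add_distrib, Finset.mul_sum]; simp
      _ ≤ (16 * X / L) * (2 * (2 * L)) + √X * (2 * √X) := by
          have : 0 ≤ 16 * X / L := by positivity
          have h6 := hs.trans (mul_le_mul_of_nonneg_left hharmY (by norm_num : (0:ℝ) ≤ 2))
          gcongr
      _ = 66 * X := by
          have h7 : √X * √X = X := Real.mul_self_sqrt hX0.le
          have h8 : L ≠ 0 := by linarith
          field_simp
          nlinarith
  linarith

lemma cheb : ∃ X₀ : ℝ, ∀ X : ℝ, X₀ ≤ X →
    X ≤ 4 * (((range (⌊X⌋₊ + 1)).filter Nat.Prime).card : ℝ) * Real.log X := by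
  have h : ∀ᶠ X : ℝ in Filter.atTop, Real.log X ≤ (1 / 16 : ℝ) * X := by
    have := Real.isLittleO_log_id_atTop.def (c := 1 / 16) (by norm_num)
    filter_upwards [this, Filter.eventually_ge_atTop 1] with X hX h1
    rw [Real.norm_of_nonneg (Real.log_nonneg h1)] at hX
    simpa [abs_of_nonneg (zero_le_one.trans h1)] using hX
  obtain ⟨A, hA⟩ := Filter.eventually_atTop.1 h
  refine ⟨max A 100, fun X hX => ?_⟩
  have hXA := (le_max_left _ _).trans hX
  have hX100 := (le_max_right _ _).trans hX
  have h1 := Chebyshev.pi_ge' (x := X) (by linarith)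
  have hpos : 0 < Real.log X := Real.log_pos (by linarith)
  rw [div_le_iff₀ hpos] at h1
  have h2 := hA (X + 2) (by linarith)
  have h3 : ((range (⌊X⌋₊ + 1)).filter Nat.Prime).card = Nat.primeCounting ⌊X⌋₊ := by
    rw [Nat.primeCounting, Nat.primeCounting', Nat.count_eq_card_filter_range]
  rw [h3]
  have h4 := Real.log_two_gt_d9
  nlinarith

theorem stmt14 (ε : ℝ) (hε : 0 < ε) :
    ∃ C : ℝ, 0 < C ∧ ∃ X₀ : ℝ, ∀ X : ℝ, X₀ ≤ X →
      (((Finset.range (⌊X⌋₊ + 1)).filter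
          (fun p => p.Prime ∧
            Real.log X ^ (1 + ε/2) ≤ ((p - 1).divisors.card : ℝ))).card : ℝ)
        ≤ C * (((Finset.range (⌊X⌋₊ + 1)).filter Nat.Prime).card : ℝ)
            * Real.log X ^ (-(ε/2)) := by
  obtain ⟨A, hA⟩ := cheb
  refine ⟨528, by norm_num, max A (Real.exp 1), fun X hX => ?_⟩
  have hXA := hA X ((le_max_left _ _).trans hX)
  have hXe := (le_max_right _ _).trans hX
  have hX0 : 0 < X := (Real.exp_pos 1).trans_le hXe
  have hb := titch_bound X hXe
  have hL1 : 1 ≤ Real.log X := by rw [Real.le_log_iff_exp_le hX0]; exact hXe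
  set L := Real.log X with hL
  have hL0 : 0 < L := by linarith
  set P := (((Finset.range (⌊X⌋₊ + 1)).filter Nat.Prime).card : ℝ) with hP
  set B := (Finset.range (⌊X⌋₊ + 1)).filter
          (fun p => p.Prime ∧ L ^ (1 + ε/2) ≤ ((p - 1).divisors.card : ℝ)) with hB
  have h1 : (B.card : ℝ) * L ^ (1 + ε/2) ≤ 132 * X := by
    calc (B.card : ℝ) * L ^ (1 + ε/2) = ∑ p ∈ B, L ^ (1 + ε/2) := by
          rw [Finset.sum_const, nsmul_eq_mul]
      _ ≤ ∑ p ∈ B, ((p - 1).divisors.card : ℝ) := by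
          apply Finset.sum_le_sum
          intro p hp
          exact (Finset.mem_filter.1 hp).2.2
      _ ≤ ∑ p ∈ (range (⌊X⌋₊ + 1)).filter Nat.Prime, ((p - 1).divisors.card : ℝ) := by
          apply Finset.sum_le_sum_of_subset_of_nonneg
          · intro p hp
            have := Finset.mem_filter.1 hp
            exact Finset.mem_filter.2 ⟨this.1, this.2.1⟩
          · intros; positivity
      _ ≤ 132 * X := by exact_mod_cast hb
  have hpow : 0 < L ^ (1 + ε/2) := Real.rpow_pos_of_pos hL0 _
  have h2 : L ^ (1 + ε/2) * L ^ (-(ε/2)) = L := by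
    rw [← Real.rpow_add hL0]; simp
  have h3 : (B.card : ℝ) * L ^ (1 + ε/2) ≤ (528 * P * L ^ (-(ε/2))) * L ^ (1 + ε/2) := by
    calc _ ≤ 132 * X := h1
      _ ≤ 528 * P * L := by linarith
      _ = 528 * P * (L ^ (1 + ε/2) * L ^ (-(ε/2))) := by rw [h2]
      _ = _ := by ring
  exact le_of_mul_le_mul_right h3 hpow
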